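/- Every (hole, dart)-free atom is nearly weakly chordal: for every vertex v, the subgraph induced on the anti-neighborhood A(v) contains no induced cycle C_k with k ≥ 5 and no induced complement of C_k with k ≥ 5. -/

import Mathlib

/-!
The first half is immediate, since an induced subgraph of a hole-free graph is hole-free, and so is
the second half for `k = 5`, as `C_5` is self-complementary. Let `h` be an antihole (an induced
complement of `C_k`) with `k ≥ 6` and vertex set `S`, and let `v ∉ S` have no neighbor in `S`.

The idea is to grow a *core*: a connected set `K ∋ v` disjoint from `S` in which every vertex has at
most one neighbor in `S`, such that the vertices of `S` with a neighbor in `K`, called *seen*, form a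
clique. Take a maximal core `K`. Its boundary consists of the seen vertices and of the boundary
vertices outside `S` (`Contact`). If the boundary is a clique, it is a clique cutset separating `v`
from an unseen vertex of `S` (`clique_boundary_false`), contrary to `G` being an atom; so it is
enough to show that the boundary is a clique (`boundary_six`, `boundary_long`).

Two mechanisms drive this. A boundary vertex has a restricted neighborhood in `S`: the forbidden dart
and hole exclude most neighborhoods, and maximality of `K` excludes the neighborhoods with which the
vertex could be added to `K`. And two nonadjacent boundary vertices are joined by an induced path
through `K`, which closes up to a hole with any induced path of length at least three between them
through unseen vertices of `S` (`two_paths_false`); common neighbors in `S` lead to darts instead.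

For `k ≥ 7`, the antihole neighborhood of a vertex that has a neighbor anticomplete to `S` contains
no two consecutive vertices and is closed under rotation by two (`AntiHole.stable`,
`AntiHole.alternating`). Hence no vertex of `S` is seen, and both mechanisms finish at once. For
`k = 6` there may be seen vertices. Following a shortest path in `K` from a boundary vertex to a seen
vertex (`Core.first_hit`) shows that the boundary vertex has one of few neighborhoods in `S`
(`Apex`, `Config.apex_of_linked`), and the possible pairs are then compared.
-/

open SimpleGraph

/-- The dart: vertices a,b,c,d,e = 0,1,2,3,4; edges ab, ac, ad, bd, cd, de. -/
def dartGraph : SimpleGraph (Fin 5) :=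
  SimpleGraph.fromEdgeSet {s(0,1), s(0,2), s(0,3), s(1,3), s(2,3), s(3,4)}

/-- The bull: vertices a,b,c,d,e = 0,1,2,3,4; edges ab, bc, cd, be, ce. -/
def bullGraph : SimpleGraph (Fin 5) :=
  SimpleGraph.fromEdgeSet {s(0,1), s(1,2), s(2,3), s(1,4), s(2,4)}

/-- The house: C4 on v1..v4 = 0..3 plus v5 = 4 adjacent to v2 = 1 and v3 = 2. -/
def houseGraph : SimpleGraph (Fin 5) :=
  SimpleGraph.fromEdgeSet {s(0,1), s(1,2), s(2,3), s(3,0), s(4,1), s(4,2)}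

/-- Anti-neighborhood of a vertex: all vertices distinct from and nonadjacent to `v`. -/
def vertexAnti {V : Type*} (G : SimpleGraph V) (v : V) : Set V :=
  {u | u ≠ v ∧ ¬ G.Adj v u}

/-- Anti-neighborhood of a set `S`: vertices outside `S` with no neighbor in `S`. -/
def antiNbhd {V : Type*} (G : SimpleGraph V) (S : Set V) : Set V :=
  {v | v ∉ S ∧ ∀ u ∈ S, ¬ G.Adj v u}

/-- Contact vertices of `S`: outside `S`, with a neighbor in `S` and a neighbor in `antiNbhd G S`. -/
def contactSet {V : Type*} (G : SimpleGraph V) (S : Set V) : Set V :=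
  {v | v ∉ S ∧ (∃ u ∈ S, G.Adj v u) ∧ ∃ w ∈ antiNbhd G S, G.Adj v w}

/-- `G` has a clique cutset: a clique whose removal disconnects the graph. -/
def HasCliqueCutset {V : Type*} (G : SimpleGraph V) : Prop :=
  ∃ C : Set V, G.IsClique C ∧ ¬ (G.induce Cᶜ).Preconnected

/-- `U` is a module: no outside vertex distinguishes two vertices of `U`. -/
def IsModule {V : Type*} (G : SimpleGraph V) (U : Set V) : Prop :=
  ∀ z ∉ U, (∀ x ∈ U, G.Adj z x) ∨ (∀ x ∈ U, ¬ G.Adj z x)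

/-- `G` is prime: all its modules are trivial. -/
def IsPrime {V : Type*} (G : SimpleGraph V) : Prop :=
  ∀ U : Set V, IsModule G U → U = ∅ ∨ (∃ x, U = {x}) ∨ U = Set.univ

/-- `G` is perfect: every induced subgraph has chromatic number equal to clique number. -/
def IsPerfect {V : Type*} (G : SimpleGraph V) : Prop :=
  ∀ s : Set V, (G.induce s).chromaticNumber = ((G.induce s).cliqueNum : ℕ∞)

/-- Distance from a vertex to a set of vertices. -/
noncomputable def setDist {V : Type*} (G : SimpleGraph V) (v : V) (S : Set V) : ℕ :=
  sInf {n | ∃ u ∈ S, n = G.dist v u}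

/-! ### Darts and holes -/

section Tools

variable {V : Type*} {G : SimpleGraph V}

theorem dart_false (hdart : IsEmpty (dartGraph ↪g G)) {a b c d e : V}
    (hab : G.Adj a b) (hac : G.Adj a c) (had : G.Adj a d) (hbd : G.Adj b d)
    (hcd : G.Adj c d) (hde : G.Adj d e) (hbc : ¬ G.Adj b c) (hae : ¬ G.Adj a e)
    (hbe : ¬ G.Adj b e) (hce : ¬ G.Adj c e) (hne : b ≠ c) : False := by
  have h1 := hab.ne
  have h2 := hac.ne
  have h3 := had.ne
  have h4 := hbd.ne
  have h5 := hcd.ne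
  have h6 := hde.ne
  have h7 : a ≠ e := by rintro rfl; exact hbe hab.symm
  have h8 : b ≠ e := by rintro rfl; exact hae hab
  have h9 : c ≠ e := by rintro rfl; exact hae hac
  refine hdart.false ⟨⟨![a, b, c, d, e], ?_⟩, ?_⟩
  · intro i j hij
    fin_cases i <;> fin_cases j <;> simp_all
  · have hbc' : ¬ G.Adj c b := fun h => hbc h.symm
    have hae' : ¬ G.Adj e a := fun h => hae h.symm
    have hbe' : ¬ G.Adj e b := fun h => hbe h.symm
    have hce' : ¬ G.Adj e c := fun h => hce h.symm
    intro i j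
    change G.Adj (![a, b, c, d, e] i) (![a, b, c, d, e] j) ↔ dartGraph.Adj i j
    fin_cases i <;> fin_cases j <;>
      simp [dartGraph, hab, hac, had, hbd, hcd, hde, hbc, hae, hbe, hce, hab.symm, hac.symm,
        had.symm, hbd.symm, hcd.symm, hde.symm, hbc', hae', hbe', hce']

/-- A cyclic sequence of length `n ≥ 5` whose only adjacencies are the consecutive ones is a hole;
its injectivity follows from the adjacencies. -/
theorem hole_false (hhole : ∀ k : ℕ, 5 ≤ k → IsEmpty (cycleGraph k ↪g G)) (n : ℕ) (hn : 5 ≤ n)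
    (f : ℕ → V)
    (hf : ∀ i j, i < j → j < n → (G.Adj (f i) (f j) ↔ j = i + 1 ∨ (i = 0 ∧ j = n - 1))) :
    False := by
  have hne : ∀ i j, i < j → j < n → f i ≠ f j := by
    intro i j hij hj he
    have hna : ¬ G.Adj (f i) (f j) := by rw [he]; exact G.loopless.irrefl _
    by_cases h1 : j + 1 < n
    · have h2 : G.Adj (f j) (f (j + 1)) := (hf j (j + 1) (by omega) h1).2 (Or.inl rfl)
      rw [← he] at h2
      have h3 := (hf i (j + 1) (by omega) h1).1 h2
      have h4 : G.Adj (f 0) (f 1) := (hf 0 1 (by omega) (by omega)).2 (Or.inl rfl)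
      have hi : i = 0 := by omega
      subst hi
      rw [he] at h4
      have h5 := (hf 1 j (by omega) hj).1 h4.symm
      omega
    · have hj' : j = n - 1 := by omega
      have h2 : G.Adj (f (n - 2)) (f j) := (hf _ _ (by omega) hj).2 (Or.inl (by omega))
      rw [hf i j hij hj] at hna
      rw [← he] at h2
      have h3 := (hf i (n - 2) (by omega) (by omega)).1 h2.symm
      have h4 : G.Adj (f 0) (f j) := (hf _ _ (by omega) hj).2 (Or.inr (by omega))
      rw [← he] at h4
      have h5 := (hf 0 i (by omega) (by omega)).1 h4
      omega
  refine (hhole n hn).false ⟨⟨fun i => f i.1, ?_⟩, ?_⟩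
  · intro i j hij
    by_contra hc
    rcases lt_or_gt_of_ne (fun h => hc (Fin.ext h) : i.1 ≠ j.1) with h | h
    · exact hne _ _ h j.2 hij
    · exact hne _ _ h i.2 hij.symm
  · have key : ∀ i j : Fin n, i.1 < j.1 → (G.Adj (f i.1) (f j.1) ↔ (cycleGraph n).Adj i j) := by
      intro i j h
      rw [hf _ _ h j.2, cycleGraph_adj', Fin.sub_val_of_le (le_of_lt (Fin.lt_def.2 h)),
        Fin.coe_sub_iff_lt.2 (Fin.lt_def.2 h)]
      have := j.2
      omega
    intro i j
    rcases lt_trichotomy i.1 j.1 with h | h | h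
    · exact key i j h
    · have : i = j := Fin.ext h
      subst this
      simp
    · change G.Adj (f i.1) (f j.1) ↔ _
      rw [G.adj_comm, key j i h, SimpleGraph.adj_comm]

theorem c5_false (hhole : ∀ k : ℕ, 5 ≤ k → IsEmpty (cycleGraph k ↪g G)) {a b c d e : V}
    (hab : G.Adj a b) (hbc : G.Adj b c) (hcd : G.Adj c d) (hde : G.Adj d e) (hea : G.Adj a e)
    (hac : ¬ G.Adj a c) (had : ¬ G.Adj a d) (hbd : ¬ G.Adj b d) (hbe : ¬ G.Adj b e)
    (hce : ¬ G.Adj c e) : False := by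
  refine hole_false hhole 5 le_rfl
    (fun i => match i with | 0 => a | 1 => b | 2 => c | 3 => d | _ => e) ?_
  intro i j hij hj
  interval_cases j <;> interval_cases i <;> simp_all

/-! ### Paths through a prescribed set -/

/-- There is a walk from `x` to `y` in `G`, given by the list of its vertices `f 0, …, f m`, all of
whose internal vertices lie in `K`. The ends need not lie in `K`. -/
def Linked (G : SimpleGraph V) (K : Set V) (x y : V) : Prop :=
  ∃ (m : ℕ) (f : ℕ → V), f 0 = x ∧ f m = y ∧ (∀ i < m, G.Adj (f i) (f (i + 1))) ∧
    ∀ i, 0 < i → i < m → f i ∈ K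

theorem Linked.mono {K L : Set V} {x y : V} (h : Linked G K x y) (hKL : K ⊆ L) :
    Linked G L x y := by
  obtain ⟨m, f, h0, hm, ha, hK⟩ := h
  exact ⟨m, f, h0, hm, ha, fun i hi him => hKL (hK i hi him)⟩

theorem Linked.of_adj {K : Set V} {x y : V} (h : G.Adj x y) : Linked G K x y := by
  refine ⟨1, fun i => if i = 0 then x else y, by simp, by simp, ?_, fun i _ _ => by omega⟩
  intro i hi
  have : i = 0 := by omega
  subst this
  simpa using h

theorem Linked.symm {K : Set V} {x y : V} (h : Linked G K x y) : Linked G K y x := by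
  obtain ⟨m, f, h0, hm, ha, hK⟩ := h
  refine ⟨m, fun i => f (m - i), by simpa using hm, by simpa using h0, ?_,
    fun i hi him => hK _ (by omega) (by omega)⟩
  intro i hi
  have := ha (m - (i + 1)) (by omega)
  rw [show m - (i + 1) + 1 = m - i by omega] at this
  exact this.symm

theorem Linked.trans {K : Set V} {x y z : V} (h : Linked G K x y) (h' : Linked G K y z)
    (hy : y ∈ K) : Linked G K x z := by
  obtain ⟨m, f, h0, hm, ha, hK⟩ := h
  obtain ⟨m', f', h0', hm', ha', hK'⟩ := h'
  refine ⟨m + m', fun i => if i ≤ m then f i else f' (i - m), by simpa using h0, ?_, ?_, ?_⟩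
  · by_cases h : m' = 0
    · subst h
      simp [hm, ← hm', h0']
    · simp [h, hm']
  · intro i hi
    rcases lt_trichotomy i m with h | h | h
    · simpa [h.le, Nat.succ_le_of_lt h] using ha i h
    · subst h
      have := ha' 0 (by omega)
      simpa [hm, ← h0'] using this
    · have := ha' (i - m) (by omega)
      rw [show i - m + 1 = i + 1 - m by omega] at this
      simpa [show ¬ i ≤ m by omega, show ¬ i + 1 ≤ m by omega] using this
  · intro i hi him
    rcases lt_trichotomy i m with h | h | h
    · simpa [h.le] using hK i hi h
    · subst h
      simpa [hm] using hy
    · simpa [show ¬ i ≤ m by omega] using hK' (i - m) (by omega) (by omega)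

/-- A shortest walk between distinct nonadjacent vertices is an induced path. -/
theorem Linked.induced {K : Set V} {x y : V} (h : Linked G K x y) (hne : x ≠ y)
    (hxy : ¬ G.Adj x y) :
    ∃ (m : ℕ) (f : ℕ → V), 2 ≤ m ∧ f 0 = x ∧ f m = y ∧ (∀ i, 0 < i → i < m → f i ∈ K) ∧
      ∀ i j, i < j → j ≤ m → (G.Adj (f i) (f j) ↔ j = i + 1) := by
  classical
  have hex : ∃ m, ∃ f : ℕ → V, f 0 = x ∧ f m = y ∧ (∀ i < m, G.Adj (f i) (f (i + 1))) ∧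
    ∀ i, 0 < i → i < m → f i ∈ K := h
  obtain ⟨f, h0, hm, ha, hK⟩ := Nat.find_spec hex
  have hmin := fun m' (hm' : m' < Nat.find hex) => Nat.find_min hex hm'
  generalize Nat.find hex = m at *
  refine ⟨m, f, ?_, h0, hm, hK, ?_⟩
  · by_contra hlt
    have : m = 0 ∨ m = 1 := by omega
    rcases this with rfl | rfl
    · exact hne (h0.symm.trans hm)
    · apply hxy
      have := ha 0 (by omega)
      rwa [h0, zero_add, hm] at this
  · intro i j hij hj
    refine ⟨fun hadj => ?_, fun e => by subst e; exact ha i (by omega)⟩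
    by_contra hcj
    -- a chord would shorten the walk
    have hlt : m - (j - i - 1) < m := by omega
    refine hmin _ hlt ⟨fun t => if t ≤ i then f t else f (t + (j - i - 1)), by simpa using h0,
      ?_, ?_, ?_⟩
    · simp [show ¬ m - (j - i - 1) ≤ i by omega,
        show m - (j - i - 1) + (j - i - 1) = m by omega, hm]
    · intro t ht
      rcases lt_trichotomy t i with h | h | h
      · simpa [h.le, Nat.succ_le_of_lt h] using ha t (by omega)
      · subst h
        simpa [show t + 1 + (j - t - 1) = j by omega] using hadj
      · have := ha (t + (j - i - 1)) (by omega)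
        rw [show t + (j - i - 1) + 1 = t + 1 + (j - i - 1) by omega] at this
        simpa [show ¬ t ≤ i by omega, show ¬ t + 1 ≤ i by omega] using this
    · intro t ht htm
      by_cases h : t ≤ i
      · simpa [h] using hK t ht (by omega)
      · simpa [h] using hK (t + (j - i - 1)) (by omega) (by omega)

/-- Two nonadjacent vertices joined through two mutually anticomplete sets `K` and `M` have a common
neighbor in `M`: otherwise two induced paths close up to a hole. -/
theorem two_paths_false (hhole : ∀ k : ℕ, 5 ≤ k → IsEmpty (cycleGraph k ↪g G)) {K M : Set V}
    {x y : V} (hne : x ≠ y) (hxy : ¬ G.Adj x y) (hKM : ∀ a ∈ K, ∀ b ∈ M, ¬ G.Adj a b)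
    (hK : Linked G K x y) (hM : Linked G M x y) (hcom : ∀ b ∈ M, ¬ (G.Adj x b ∧ G.Adj y b)) :
    False := by
  obtain ⟨m, p, hm, hp0, hpm, hpK, hp⟩ := hK.induced hne hxy
  obtain ⟨l, q, hl, hq0, hql, hqM, hq⟩ := hM.induced hne hxy
  have hl3 : 3 ≤ l := by
    by_contra hlt
    have : l = 2 := by omega
    subst this
    refine hcom (q 1) (hqM 1 (by omega) (by omega)) ⟨?_, ?_⟩
    · rw [← hq0]; exact (hq 0 1 (by omega) (by omega)).2 rfl
    · rw [← hql]; exact ((hq 1 2 (by omega) (by omega)).2 rfl).symm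
  refine hole_false hhole (m + l) (by omega) (fun i => if i ≤ m then p i else q (m + l - i)) ?_
  intro i j hij hj
  by_cases hjm : j ≤ m
  · simp only [hjm, show i ≤ m by omega, if_true]
    rw [hp i j hij hjm]
    omega
  · by_cases him : i ≤ m
    · simp only [hjm, him, if_true, if_false]
      rcases Nat.eq_zero_or_pos i with h0 | h0
      · subst h0
        rw [hp0, ← hq0, hq 0 _ (by omega) (by omega)]
        omega
      · rcases Nat.lt_or_ge i m with h | h
        · have := hKM _ (hpK i h0 h) _ (hqM (m + l - j) (by omega) (by omega))
          simp only [this, false_iff]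
          omega
        · have : i = m := by omega
          subst this
          rw [hpm, ← hql, G.adj_comm, hq _ l (by omega) (by omega)]
          omega
    · simp only [hjm, him, if_false]
      rw [G.adj_comm, hq _ _ (by omega) (by omega)]
      omega

/-- The case of `two_paths_false` where the second path is `x, a, b, y`. -/
theorem hole2 (hhole : ∀ k : ℕ, 5 ≤ k → IsEmpty (cycleGraph k ↪g G)) {K : Set V} {x y a b : V}
    (hne : x ≠ y) (hxy : ¬ G.Adj x y) (hK : Linked G K x y)
    (hKa : ∀ w ∈ K, ¬ G.Adj w a) (hKb : ∀ w ∈ K, ¬ G.Adj w b)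
    (hxa : G.Adj x a) (hab : G.Adj a b) (hby : G.Adj y b) (hya : ¬ G.Adj y a)
    (hxb : ¬ G.Adj x b) : False := by
  refine two_paths_false hhole (M := {a, b}) hne hxy ?_ hK ?_ ?_
  · rintro w hw c (rfl | rfl)
    exacts [hKa w hw, hKb w hw]
  · exact ((Linked.of_adj hxa).trans (Linked.of_adj hab) (by simp)).trans
      (Linked.of_adj hby.symm) (by simp)
  · rintro c (rfl | rfl) <;> tauto

/-- The case of `two_paths_false` where the second walk is `x, a, b, c, y`, possibly with the chords
`x b` or `b y`. -/
theorem hole3 (hhole : ∀ k : ℕ, 5 ≤ k → IsEmpty (cycleGraph k ↪g G)) {K : Set V} {x y a b c : V}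
    (hne : x ≠ y) (hxy : ¬ G.Adj x y) (hK : Linked G K x y)
    (hKa : ∀ w ∈ K, ¬ G.Adj w a) (hKb : ∀ w ∈ K, ¬ G.Adj w b) (hKc : ∀ w ∈ K, ¬ G.Adj w c)
    (hxa : G.Adj x a) (hab : G.Adj a b) (hbc : G.Adj b c) (hcy : G.Adj y c) (hya : ¬ G.Adj y a)
    (hb : ¬ (G.Adj x b ∧ G.Adj y b)) (hxc : ¬ G.Adj x c) : False := by
  refine two_paths_false hhole (M := {a, b, c}) hne hxy ?_ hK ?_ ?_
  · rintro w hw d (rfl | rfl | rfl)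
    exacts [hKa w hw, hKb w hw, hKc w hw]
  · exact (((Linked.of_adj hxa).trans (Linked.of_adj hab) (by simp)).trans
      (Linked.of_adj hbc) (by simp)).trans (Linked.of_adj hcy.symm) (by simp)
  · rintro d (rfl | rfl | rfl) <;> tauto

/-- If the boundary of a set `K` is a clique and does not exhaust the rest of the graph, it is a
clique cutset. -/
theorem clique_boundary_false (hatom : ¬ HasCliqueCutset G) {K : Set V} {v u : V} (hv : v ∈ K)
    (hu : u ∉ K) (hu' : ∀ w ∈ K, ¬ G.Adj w u)
    (hcl : ∀ x y, x ∉ K → y ∉ K → (∃ w ∈ K, G.Adj w x) → (∃ w ∈ K, G.Adj w y) → x ≠ y →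
      G.Adj x y) : False := by
  refine hatom ⟨{x | x ∉ K ∧ ∃ w ∈ K, G.Adj w x}, ?_, ?_⟩
  · rintro x ⟨hx, hx'⟩ y ⟨hy, hy'⟩ hne
    exact hcl x y hx hy hx' hy' hne
  · intro hpre
    obtain ⟨p⟩ := hpre ⟨v, fun h => h.1 hv⟩ ⟨u, fun h => h.2.elim fun w hw => hu' w hw.1 hw.2⟩
    have key : ∀ (a b : ({x | x ∉ K ∧ ∃ w ∈ K, G.Adj w x}ᶜ : Set V))
        (q : (G.induce ({x | x ∉ K ∧ ∃ w ∈ K, G.Adj w x}ᶜ : Set V)).Walk a b),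
        a.1 ∈ K → b.1 ∈ K := by
      intro a b q
      induction q with
      | nil => exact id
      | @cons a c b hac q ih =>
        intro ha
        apply ih
        by_contra hc
        exact c.2 ⟨hc, a.1, ha, hac⟩
    exact hu (key _ _ p hv)

end Tools

/-! ### Antiholes and a single outside vertex -/

/-- `h` lists cyclically, with period `k`, the vertices of an induced complement of `C_k`: two of
them are nonadjacent exactly when they are equal or consecutive. Indexing by `ℤ` makes all adjacency
questions linear arithmetic and makes rotations plain translations. -/
structure AntiHole {V : Type*} (G : SimpleGraph V) (k : ℤ) (h : ℤ → V) : Prop where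
  far : ∀ i j, i + 2 ≤ j → j ≤ i + k - 2 → G.Adj (h i) (h j)
  near : ∀ i, ¬ G.Adj (h i) (h (i + 1))
  per : ∀ i, h (i + k) = h i

/-- Indices at cyclic distance at least two. -/
def Far (k i j : ℤ) : Prop := (i + 2 ≤ j ∧ j ≤ i + k - 2) ∨ (j + 2 ≤ i ∧ i ≤ j + k - 2)

/-- Indices at cyclic distance one, where representatives differ by less than `k`. -/
def Near (k i j : ℤ) : Prop := j = i + 1 ∨ i = j + 1 ∨ j = i + k - 1 ∨ i = j + k - 1

namespace AntiHole

variable {V : Type*} {G : SimpleGraph V} {k : ℤ} {h : ℤ → V}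

theorem adj (H : AntiHole G k h) {i j : ℤ} (hij : Far k i j) : G.Adj (h i) (h j) := by
  rcases hij with ⟨h1, h2⟩ | ⟨h1, h2⟩
  · exact H.far i j h1 h2
  · exact (H.far j i h1 h2).symm

theorem nadj (H : AntiHole G k h) {i j : ℤ} (hij : Near k i j) : ¬ G.Adj (h i) (h j) := by
  have key : ∀ i j, j = i + k - 1 → ¬ G.Adj (h i) (h j) := by
    intro i j e hadj
    rw [← H.per i, show i + k = j + 1 by omega] at hadj
    exact H.near j hadj.symm
  rcases hij with e | e | e | e
  · rw [e]; exact H.near i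
  · rw [e, G.adj_comm]; exact H.near j
  · exact key i j e
  · rw [G.adj_comm]; exact key j i e

theorem ne (H : AntiHole G k h) (hk : 6 ≤ k) {i j : ℤ} (h1 : i < j) (h2 : j < i + k) :
    h i ≠ h j := by
  intro e
  by_cases h3 : j = i + 1
  · subst h3
    apply H.near (i + 1)
    rw [← e]
    exact H.far _ _ (by omega) (by omega)
  by_cases h4 : j = i + k - 1
  · subst h4
    apply H.near (i + k - 1 - 1)
    rw [sub_add_cancel, ← e, G.adj_comm]
    exact H.far _ _ (by omega) (by omega)
  · exact (H.far i j (by omega) (by omega)).ne e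

theorem shift (H : AntiHole G k h) (s : ℤ) : AntiHole G k (fun i => h (i + s)) where
  far i j h1 h2 := H.far _ _ (by omega) (by omega)
  near i := by
    have := H.near (i + s)
    rwa [show i + s + 1 = i + 1 + s by omega] at this
  per i := by
    have := H.per (i + s)
    rwa [show i + s + k = i + k + s by omega] at this

theorem range_shift (s : ℤ) : Set.range (fun i => h (i + s)) = Set.range h := by
  ext x
  constructor
  · rintro ⟨i, rfl⟩
    exact ⟨i + s, rfl⟩
  · rintro ⟨i, rfl⟩
    exact ⟨i - s, by simp⟩

theorem per_mul (H : AntiHole G k h) (n i : ℤ) : h (i + k * n) = h i := by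
  induction n using Int.induction_on with
  | zero => simp
  | succ n ih => rw [← ih, ← H.per (i + k * n)]; congr 1; ring
  | pred n ih => rw [← ih, ← H.per (i + k * (-n - 1))]; congr 1; ring

theorem eq_emod (H : AntiHole G k h) (i : ℤ) : h i = h (i % k) := by
  conv_lhs => rw [← Int.emod_add_mul_ediv i k]
  exact H.per_mul _ _

/-- A dart formed by an outside vertex `z` and four antihole vertices, `z` being one of the two
nonadjacent vertices of degree two. -/
theorem dart1 (hdart : IsEmpty (dartGraph ↪g G)) (H : AntiHole G k h) {z : V}
    (hz : z ∉ Set.range h) (d a c e : ℤ)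
    (hi : Far k a c ∧ Far k a d ∧ Far k c d ∧ Far k d e ∧ Near k a e ∧ Near k c e)
    (hzd : G.Adj z (h d)) (hza : G.Adj z (h a)) (hzc : ¬ G.Adj z (h c))
    (hze : ¬ G.Adj z (h e)) : False := by
  obtain ⟨h1, h2, h3, h4, h5, h6⟩ := hi
  exact dart_false hdart hza.symm (H.adj h1) (H.adj h2) hzd (H.adj h3) (H.adj h4) hzc
    (H.nadj h5) hze (H.nadj h6) (fun e => hz ⟨c, e.symm⟩)

/-- A dart whose vertex of degree four is the outside vertex `z` and whose pendant vertex is a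
neighbor `w` of `z`. -/
theorem dart2 (hdart : IsEmpty (dartGraph ↪g G)) (H : AntiHole G k h) (hk : 6 ≤ k) {z w : V}
    (a b : ℤ) (hi : Far k a b ∧ Far k a (b + 1)) (hwz : G.Adj w z)
    (hza : G.Adj z (h a)) (hzb : G.Adj z (h b)) (hzc : G.Adj z (h (b + 1)))
    (hwa : ¬ G.Adj w (h a)) (hwb : ¬ G.Adj w (h b)) (hwc : ¬ G.Adj w (h (b + 1))) : False :=
  dart_false hdart (H.adj hi.1) (H.adj hi.2) hza.symm hzb.symm hzc.symm hwz.symm (H.near b)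
    (fun e => hwa e.symm) (fun e => hwb e.symm) (fun e => hwc e.symm)
    (H.ne hk (by omega) (by omega))

/-- A dart whose two nonadjacent vertices of degree two lie outside the antihole. -/
theorem dart3 (hdart : IsEmpty (dartGraph ↪g G)) (H : AntiHole G k h) {z z' : V} (hne : z ≠ z')
    (hzz : ¬ G.Adj z z') (d a e : ℤ) (hi : Far k a d ∧ Far k d e ∧ Near k a e)
    (hzd : G.Adj z (h d)) (hza : G.Adj z (h a)) (hze : ¬ G.Adj z (h e))
    (hzd' : G.Adj z' (h d)) (hza' : G.Adj z' (h a)) (hze' : ¬ G.Adj z' (h e)) : False :=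
  dart_false hdart hza.symm hza'.symm (H.adj hi.1) hzd hzd' (H.adj hi.2.1) hzz (H.nadj hi.2.2)
    hze hze' hne

/-- A `C_5` formed by an outside vertex `z` and an induced path `h a, h b, h c, h d`. -/
theorem c5 (hhole : ∀ k : ℕ, 5 ≤ k → IsEmpty (cycleGraph k ↪g G)) (H : AntiHole G k h) {z : V}
    (a b c d : ℤ)
    (hi : Far k a b ∧ Far k b c ∧ Far k c d ∧ Near k a c ∧ Near k a d ∧ Near k b d)
    (hza : G.Adj z (h a)) (hzb : ¬ G.Adj z (h b)) (hzc : ¬ G.Adj z (h c))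
    (hzd : G.Adj z (h d)) : False := by
  obtain ⟨h1, h2, h3, h4, h5, h6⟩ := hi
  exact c5_false hhole hza (H.adj h1) (H.adj h2) (H.adj h3) hzd hzb hzc (H.nadj h4) (H.nadj h5)
    (H.nadj h6)

/-- The antihole neighbors of a vertex `z` form a clique as soon as `z` has a neighbor `w` that is
anticomplete to the antihole. -/
theorem stable (hhole : ∀ k : ℕ, 5 ≤ k → IsEmpty (cycleGraph k ↪g G))
    (hdart : IsEmpty (dartGraph ↪g G)) (H : AntiHole G k h) (hk : 6 ≤ k) {z w : V}
    (hz : z ∉ Set.range h) (hwz : G.Adj w z) (hw : ∀ i, ¬ G.Adj w (h i)) (i : ℤ)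
    (h0 : G.Adj z (h i)) (h1 : G.Adj z (h (i + 1))) : False := by
  have no3 : ∀ i, G.Adj z (h i) → G.Adj z (h (i + 1)) → ¬ G.Adj z (h (i + 2)) := by
    intro i h0 h1 h2
    refine H.dart1 hdart hz i (i + 2) (i + 4) (i + 3) (by unfold Far Near; omega) h0 h2 ?_ ?_
    · intro h4
      exact H.dart2 hdart hk (i + 4) i (by unfold Far; omega) hwz h4 h0 h1 (hw _) (hw _) (hw _)
    · intro h3
      exact H.dart2 hdart hk (i + 3) i (by unfold Far; omega) hwz h3 h0 h1 (hw _) (hw _) (hw _)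
  refine H.c5 hhole i (i + 2) (i - 1) (i + 1) (by unfold Far Near; omega) h0 (no3 i h0 h1) ?_ h1
  intro h3
  refine no3 (i - 1) h3 (by simpa using h0) ?_
  rwa [show i - 1 + 2 = i + 1 by omega]

/-- For `k ≥ 7`, a clique arising as antihole neighborhood is closed under rotation by two. -/
theorem alternating (hdart : IsEmpty (dartGraph ↪g G)) (H : AntiHole G k h) (hk : 7 ≤ k) {z : V}
    (hz : z ∉ Set.range h) (hs : ∀ i, G.Adj z (h i) → ¬ G.Adj z (h (i + 1))) (i : ℤ)
    (h0 : G.Adj z (h i)) : G.Adj z (h (i + 2)) := by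
  by_contra h2
  have hs' : ∀ c, G.Adj z (h (i + c)) → ¬ G.Adj z (h (i + (c + 1))) := by
    intro c
    rw [← add_assoc]
    exact hs _
  by_cases h3 : G.Adj z (h (i + 3))
  · by_cases h5 : G.Adj z (h (i + 5))
    · exact H.dart1 hdart hz (i + 5) i (i + 2) (i + 1) (by unfold Far Near; omega) h5 h0 h2
        (hs i h0)
    · exact H.dart1 hdart hz i (i + 3) (i + 5) (i + 4) (by unfold Far Near; omega) h0 h3 h5
        (hs' 3 h3)
  · by_cases h5 : G.Adj z (h (i + 5))
    · exact H.dart1 hdart hz i (i + 5) (i + 3) (i + 4) (by unfold Far Near; omega) h0 h5 h3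
        (fun h4 => hs' 4 h4 h5)
    · exact dart_false hdart (H.adj (i := i + 5) (j := i + 2) (by unfold Far; omega))
        (H.adj (j := i + 3) (by unfold Far; omega)) (H.adj (j := i) (by unfold Far; omega))
        (H.adj (by unfold Far; omega)) (H.adj (by unfold Far; omega)) h0.symm
        (H.nadj (by unfold Near; omega)) (fun e => h5 e.symm) (fun e => h2 e.symm)
        (fun e => h3 e.symm) (H.ne (by omega) (by omega) (by omega))

end AntiHole

/-! ### Cores -/

/-- A connected set `K` around `v`, disjoint from `S`, each of whose vertices has at most one
neighbor in `S`, these neighbors together forming a clique. A maximal core yields the clique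
cutset. -/
structure Core {V : Type*} (G : SimpleGraph V) (S : Set V) (v : V) (K : Set V) : Prop where
  mem : v ∈ K
  conn : ∀ a ∈ K, Linked G K v a
  disj : ∀ a ∈ K, a ∉ S
  uniq : ∀ w ∈ K, ∀ a ∈ S, ∀ b ∈ S, G.Adj w a → G.Adj w b → a = b
  clique : ∀ w ∈ K, ∀ w' ∈ K, ∀ a ∈ S, ∀ b ∈ S, G.Adj w a → G.Adj w' b → a ≠ b → G.Adj a b

namespace Core

variable {V : Type*} {G : SimpleGraph V} {S K : Set V} {v : V}

theorem singleton (hv : v ∉ S) (hvS : ∀ a ∈ S, ¬ G.Adj v a) : Core G S v {v} where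
  mem := rfl
  conn := by
    rintro a rfl
    exact ⟨0, fun _ => a, rfl, rfl, fun i hi => by omega, fun i _ hi => by omega⟩
  disj := by rintro a rfl; exact hv
  uniq := by rintro w rfl a ha b hb h; exact absurd h (hvS a ha)
  clique := by rintro w rfl w' - a ha b hb h; exact absurd h (hvS a ha)

/-- A core grows by a boundary vertex `z` with at most one neighbor in `S`, provided that neighbor is
adjacent to the other vertices of `S` that have a neighbor in `K`. -/
theorem insert (C : Core G S v K) {z w : V} (hz : z ∉ S) (hw : w ∈ K) (hwz : G.Adj w z)
    (huniq : ∀ a ∈ S, ∀ b ∈ S, G.Adj z a → G.Adj z b → a = b)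
    (hcl : ∀ u ∈ K, ∀ a ∈ S, ∀ b ∈ S, G.Adj z a → G.Adj u b → a ≠ b → G.Adj a b) :
    Core G S v (insert z K) where
  mem := Or.inr C.mem
  conn := by
    rintro a (rfl | ha)
    · exact ((C.conn w hw).mono (Set.subset_insert _ _)).trans (Linked.of_adj hwz) (Or.inr hw)
    · exact (C.conn a ha).mono (Set.subset_insert _ _)
  disj := by
    rintro a (rfl | ha)
    exacts [hz, C.disj a ha]
  uniq := by
    rintro a (rfl | ha)
    exacts [huniq, C.uniq a ha]
  clique := by
    rintro u (rfl | hu) u' (rfl | hu') a ha b hb h1 h2 hne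
    · exact absurd (huniq a ha b hb h1 h2) hne
    · exact hcl u' hu' a ha b hb h1 h2 hne
    · exact (hcl u hu b hb a ha h2 h1 hne.symm).symm
    · exact C.clique u hu u' hu' a ha b hb h1 h2 hne

/-- Two vertices attached to a core are linked through it. -/
theorem linked (C : Core G S v K) {x y w w' : V} (hw : w ∈ K) (hw' : w' ∈ K) (hx : G.Adj w x)
    (hy : G.Adj w' y) : Linked G K x y :=
  (((Linked.of_adj hx.symm).trans (C.conn w hw).symm hw).trans (C.conn w' hw') C.mem).trans
    (Linked.of_adj hy) hw'

/-- From a vertex `z` attached to a core, a shortest path towards the core vertices having a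
neighbor in `S` meets only one vertex `q` of `S` in its neighborhood. -/
theorem first_hit (C : Core G S v K) {z w u b : V} (hz : z ∉ K) (hw : w ∈ K)
    (hwz : G.Adj w z) (hu : u ∈ K) (hb : b ∈ S) (hub : G.Adj u b) :
    ∃ q ∈ S, (∃ p ∈ K, G.Adj p q) ∧ (∃ y ∈ K, G.Adj y z ∧ ∀ a ∈ S, G.Adj y a → a = q) ∧
      Linked G {y | y ∈ K ∧ ∀ a ∈ S, G.Adj y a → a = q} z q := by
  classical
  have hex : ∃ m, ∃ f : ℕ → V, f 0 = z ∧ f m ∈ K ∧ (∃ a ∈ S, G.Adj (f m) a) ∧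
      (∀ i < m, G.Adj (f i) (f (i + 1))) ∧ ∀ i, 0 < i → i < m → f i ∈ K := by
    obtain ⟨m, f, h0, hm, ha, hK⟩ :=
      ((Linked.of_adj hwz.symm).trans (C.conn w hw).symm hw).trans (C.conn u hu) C.mem
    exact ⟨m, f, h0, hm ▸ hu, ⟨b, hb, hm ▸ hub⟩, ha, hK⟩
  obtain ⟨f, h0, hmK, ⟨q, hq, hmq⟩, ha, hK⟩ := Nat.find_spec hex
  have hmin := fun m' (hm' : m' < Nat.find hex) => Nat.find_min hex hm'
  generalize Nat.find hex = m at *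
  have hm0 : 0 < m := by
    rcases Nat.eq_zero_or_pos m with rfl | h
    · rw [h0] at hmK; exact absurd hmK hz
    · exact h
  have hfK : ∀ i, 0 < i → i ≤ m → f i ∈ K := by
    intro i hi him
    rcases him.lt_or_eq with h | rfl
    exacts [hK i hi h, hmK]
  have hfq : ∀ i, 0 < i → i ≤ m → ∀ a ∈ S, G.Adj (f i) a → a = q := by
    intro i hi him a haS hadj
    rcases him.lt_or_eq with h | rfl
    · exact absurd ⟨f, h0, hK i hi h, ⟨a, haS, hadj⟩, fun j hj => ha j (hj.trans h),
        fun j hj hj' => hK j hj (hj'.trans h)⟩ (hmin i h)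
    · exact C.uniq _ hmK a haS q hq hadj hmq
  refine ⟨q, hq, ⟨_, hmK, hmq⟩, ⟨f 1, hfK 1 one_pos hm0, ?_, hfq 1 one_pos hm0⟩, ?_⟩
  · have := ha 0 hm0
    rw [h0] at this
    exact this.symm
  · have hL : Linked G {y | y ∈ K ∧ ∀ a ∈ S, G.Adj y a → a = q} z (f m) :=
      ⟨m, f, h0, rfl, ha, fun i hi him => ⟨hK i hi him, hfq i hi him.le⟩⟩
    exact hL.trans (Linked.of_adj hmq) ⟨hmK, hfq m hm0 le_rfl⟩

end Core

/-! ### Maximal cores of an antihole -/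

/-- The standing situation: a maximal core `K` around `v` for the vertex set of an antihole `h` in a
graph without holes and darts. -/
structure Config {V : Type*} (G : SimpleGraph V) (k : ℤ) (h : ℤ → V) (v : V) (K : Set V) :
    Prop where
  hole : ∀ n : ℕ, 5 ≤ n → IsEmpty (cycleGraph n ↪g G)
  dart : IsEmpty (dartGraph ↪g G)
  le : 6 ≤ k
  anti : AntiHole G k h
  core : Core G (Set.range h) v K
  max : ∀ z ∉ K, ¬ Core G (Set.range h) v (insert z K)

/-- A boundary vertex `z` of `K` outside the antihole. -/
structure Contact {V : Type*} (G : SimpleGraph V) (h : ℤ → V) (K : Set V) (z : V) : Prop where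
  notMem : z ∉ K
  out : z ∉ Set.range h
  ex : ∃ w ∈ K, G.Adj w z

/-- The vertex `a` has a neighbor in `K`; used for antihole vertices only. -/
def Seen {V : Type*} (G : SimpleGraph V) (K : Set V) (a : V) : Prop := ∃ u ∈ K, G.Adj u a

namespace Config

variable {V : Type*} {G : SimpleGraph V} {k : ℤ} {h : ℤ → V} {v z z' : V} {K : Set V}

theorem shift (X : Config G k h v K) (s : ℤ) : Config G k (fun i => h (i + s)) v K where
  hole := X.hole
  dart := X.dart
  le := X.le
  anti := X.anti.shift s
  core := by rw [AntiHole.range_shift]; exact X.core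
  max := by rw [AntiHole.range_shift]; exact X.max

theorem _root_.Contact.shift (Z : Contact G h K z) (s : ℤ) :
    Contact G (fun i => h (i + s)) K z where
  notMem := Z.notMem
  out := by rw [AntiHole.range_shift]; exact Z.out
  ex := Z.ex

theorem near_ne (X : Config G k h v K) {i j : ℤ} (hij : Near k i j) : h i ≠ h j := by
  have := X.le
  rcases hij with e | e | e | e
  · exact X.anti.ne X.le (by omega) (by omega)
  · exact (X.anti.ne X.le (by omega) (by omega)).symm
  · exact X.anti.ne X.le (by omega) (by omega)
  · exact (X.anti.ne X.le (by omega) (by omega)).symm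

/-- Consecutive antihole vertices are not both seen, since the seen vertices form a clique. -/
theorem not_seen (X : Config G k h v K) {i : ℤ} (hi : Seen G K (h i)) (j : ℤ)
    (hij : Near k i j) : ∀ u ∈ K, ¬ G.Adj u (h j) := by
  obtain ⟨w, hw, hwi⟩ := hi
  intro u hu huj
  exact X.anti.nadj hij
    (X.core.clique w hw u hu _ ⟨i, rfl⟩ _ ⟨j, rfl⟩ hwi huj (X.near_ne hij))

/-- If a boundary vertex `z` has no antihole neighbor besides `h r`, maximality of the core gives a
seen vertex that is not adjacent to `h r`. -/
theorem obstruction (X : Config G k h v K) (Z : Contact G h K z) (r : ℤ)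
    (hr : ∀ a ∈ Set.range h, G.Adj z a → a = h r) :
    G.Adj z (h r) ∧ ∃ b ∈ Set.range h, Seen G K b ∧ h r ≠ b ∧ ¬ G.Adj (h r) b := by
  obtain ⟨w, hw, hwz⟩ := Z.ex
  by_contra hcon
  refine X.max z Z.notMem (X.core.insert Z.out hw hwz ?_ ?_)
  · intro a ha b hb h1 h2
    rw [hr a ha h1, hr b hb h2]
  · intro u hu a ha b hb h1 h2 hne
    have := hr a ha h1
    subst this
    by_contra hab
    exact hcon ⟨h1, b, hb, ⟨u, hu, h2⟩, hne, hab⟩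

theorem linked (X : Config G k h v K) {x y : V} (hx : Seen G K x) (hy : Seen G K y) :
    Linked G K x y := by
  obtain ⟨w, hw, hwx⟩ := hx
  obtain ⟨w', hw', hwy⟩ := hy
  exact X.core.linked hw hw' hwx hwy

/-- Two nonadjacent boundary vertices `z`, `z'` cannot have private neighbors `h i`, `h j`,
respectively, that are adjacent and unseen: these would close a path through `K` to a hole. -/
theorem cross (X : Config G k h v K) (Z : Contact G h K z) (Z' : Contact G h K z') (hne : z ≠ z')
    (hzz : ¬ G.Adj z z') (i j : ℤ) (hij : Far k i j) (hi : ∀ u ∈ K, ¬ G.Adj u (h i))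
    (hj : ∀ u ∈ K, ¬ G.Adj u (h j)) (h1 : G.Adj z (h i)) (h2 : G.Adj z' (h j))
    (h3 : ¬ G.Adj z (h j)) (h4 : ¬ G.Adj z' (h i)) : False :=
  hole2 X.hole hne hzz (X.linked Z.ex Z'.ex) hi hj h1 (X.anti.adj hij) h2 h4 h3

/-- A boundary vertex `z` adjacent to `h i` is adjacent to a seen vertex `h j` next to `h i`, unless
it is adjacent to every unseen common neighbor `h b` of both. -/
theorem reach (X : Config G k h v K) (Z : Contact G h K z) (i j b : ℤ)
    (hd : Near k j i ∧ Far k i b ∧ Far k j b) (hj : Seen G K (h j))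
    (hb : ∀ u ∈ K, ¬ G.Adj u (h b)) (h1 : G.Adj z (h i)) (h2 : ¬ G.Adj z (h b)) :
    G.Adj z (h j) := by
  by_contra h3
  exact hole2 X.hole (fun e => Z.out ⟨j, e.symm⟩) h3 (X.linked Z.ex hj) (X.not_seen hj i hd.1) hb
    h1 (X.anti.adj hd.2.1) (X.anti.adj hd.2.2) (X.anti.nadj hd.1) h2

/-! ### Antiholes of length six -/

theorem cases6 (X : Config G 6 h v K) {a : V} (ha : a ∈ Set.range h) :
    a = h 0 ∨ a = h 1 ∨ a = h 2 ∨ a = h 3 ∨ a = h 4 ∨ a = h 5 := by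
  obtain ⟨i, rfl⟩ := ha
  rw [X.anti.eq_emod i]
  have h1 := Int.emod_nonneg i (show (6 : ℤ) ≠ 0 by norm_num)
  have h2 := Int.emod_lt_of_pos i (show (0 : ℤ) < 6 by norm_num)
  generalize i % 6 = j at *
  interval_cases j <;> simp

/-- The standard shape at `h 0` of the antihole neighborhood of a boundary vertex `z`, for an
antihole of length six: `z` is adjacent to `h 0` but not to the vertices next to it in cyclic order,
it does not distinguish `h 2` from `h 4`, and it has an antihole neighbor other than `h 0`. The shape
at `h s` is expressed by translating the indices by `s`. -/
def _root_.Apex {V : Type*} (G : SimpleGraph V) (h : ℤ → V) (z : V) : Prop :=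
  G.Adj z (h 0) ∧ ¬ G.Adj z (h 1) ∧ ¬ G.Adj z (h 5) ∧ (G.Adj z (h 2) ↔ G.Adj z (h 4)) ∧
    (G.Adj z (h 3) ∨ G.Adj z (h 2))

/-- A boundary vertex with antihole neighbor `h 0` and a neighbor in `K` anticomplete to the antihole
either has the standard shape or has `h 0` as its only antihole neighbor. -/
theorem apex_of_anticomplete (X : Config G 6 h v K) (Z : Contact G h K z) {w : V}
    (hwz : G.Adj w z) (hw : ∀ i, ¬ G.Adj w (h i)) (h0 : G.Adj z (h 0)) :
    Apex G h z ∨ ∀ a ∈ Set.range h, G.Adj z a → a = h 0 := by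
  have st := X.anti.stable X.hole X.dart X.le Z.out hwz hw
  have n1 : ¬ G.Adj z (h 1) := st 0 h0
  have n5 : ¬ G.Adj z (h 5) := fun h5 => st 5 h5 (by
    have := X.anti.per 0
    rw [show (5 : ℤ) + 1 = 0 + 6 by norm_num, this]; exact h0)
  have n23 : G.Adj z (h 2) → ¬ G.Adj z (h 3) := st 2
  have n34 : G.Adj z (h 3) → ¬ G.Adj z (h 4) := st 3
  have n24 : G.Adj z (h 2) → G.Adj z (h 4) := fun h2 => by
    by_contra h4
    exact X.anti.dart1 X.dart Z.out 0 2 4 3 (by unfold Far Near; omega) h0 h2 h4 (n23 h2)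
  have n42 : G.Adj z (h 4) → G.Adj z (h 2) := fun h4 => by
    by_contra h2
    exact X.anti.dart1 X.dart Z.out 0 4 2 3 (by unfold Far Near; omega) h0 h4 h2
      (fun h3 => n34 h3 h4)
  by_cases hc : G.Adj z (h 3) ∨ G.Adj z (h 2)
  · exact Or.inl ⟨h0, n1, n5, ⟨n24, n42⟩, hc⟩
  · refine Or.inr fun a ha hza => ?_
    rcases X.cases6 ha with rfl | rfl | rfl | rfl | rfl | rfl <;> tauto

/-- The shape of the antihole neighborhood of a boundary vertex from which `h 0` is reached through
core vertices that have no other antihole neighbor. If `z` is adjacent to `h 0`, excluding darts and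
holes leaves the standard shape and the neighborhood `{h 0}`, which contradicts maximality of the
core. If `z` is not adjacent to `h 0`, its antihole neighborhood has at most one element, and again
maximality applies. -/
theorem apex_of_linked (X : Config G 6 h v K) (Z : Contact G h K z) {w : V} (hwK : w ∈ K)
    (hwz : G.Adj w z) (hw : ∀ a ∈ Set.range h, G.Adj w a → a = h 0)
    (hL : Linked G {y | y ∈ K ∧ ∀ a ∈ Set.range h, G.Adj y a → a = h 0} z (h 0))
    (hp : Seen G K (h 0)) : Apex G h z := by
  have ne0 : ∀ i, 0 < i → i < 6 → h i ≠ h 0 := fun i h1 h2 =>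
    (X.anti.ne X.le h1 (by omega)).symm
  have hKq : ∀ i, 0 < i → i < 6 →
      ∀ y ∈ {y | y ∈ K ∧ ∀ a ∈ Set.range h, G.Adj y a → a = h 0}, ¬ G.Adj y (h i) :=
    fun i h1 h2 y hy hyi => ne0 i h1 h2 (hy.2 _ ⟨i, rfl⟩ hyi)
  have hwn : ∀ i, 0 < i → i < 6 → ¬ G.Adj w (h i) :=
    fun i h1 h2 hwi => ne0 i h1 h2 (hw _ ⟨i, rfl⟩ hwi)
  have hK1 := X.not_seen hp 1 (by unfold Near; omega)
  have hK5 := X.not_seen hp 5 (by unfold Near; omega)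
  have f20 := X.anti.adj (i := 2) (j := 0) (by unfold Far; omega)
  have f30 := X.anti.adj (i := 3) (j := 0) (by unfold Far; omega)
  have f40 := X.anti.adj (i := 4) (j := 0) (by unfold Far; omega)
  have single : (∀ a ∈ Set.range h, G.Adj z a → a = h 0) → False := by
    intro hr
    obtain ⟨-, b, hb, hs, hne, hnb⟩ := X.obstruction Z 0 hr
    obtain ⟨u, hu, hub⟩ := hp
    obtain ⟨u', hu', hub'⟩ := hs
    exact hnb (X.core.clique u hu u' hu' _ ⟨0, rfl⟩ b hb hub hub' hne)
  by_cases h0 : G.Adj z (h 0)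
  · by_cases hw0 : G.Adj w (h 0)
    · have d4 : ∀ c e, (Far 6 0 c ∧ Near 6 0 e ∧ Near 6 c e) ∧ 0 < c ∧ c < 6 ∧ 0 < e ∧ e < 6 →
          G.Adj z (h c) → ¬ G.Adj z (h e) := by
        rintro c e ⟨⟨i1, i2, i3⟩, c1, c2, e1, e2⟩ hc he
        exact dart_false X.dart hw0.symm (X.anti.adj i1) h0.symm hwz hc.symm he (hwn c c1 c2)
          (X.anti.nadj i2) (hwn e e1 e2) (X.anti.nadj i3)
          (fun hwc => X.core.disj w hwK ⟨c, hwc.symm⟩)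
      have d5 : ∀ c e, (Far 6 0 c ∧ Far 6 0 e ∧ Near 6 c e) ∧ 0 < c ∧ c < 6 ∧ 0 < e ∧ e < 6 →
          G.Adj z (h c) → G.Adj z (h e) := by
        rintro c e ⟨⟨i1, i2, i3⟩, c1, c2, e1, e2⟩ hc
        by_contra he
        exact dart_false X.dart hwz.symm hc h0 hw0 (X.anti.adj i1).symm (X.anti.adj i2)
          (hwn c c1 c2) he (hwn e e1 e2) (X.anti.nadj i3)
          (fun hwc => X.core.disj w hwK ⟨c, hwc.symm⟩)
      have n21 := d4 2 1 (by unfold Far Near; omega)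
      have n45 := d4 4 5 (by unfold Far Near; omega)
      have m23 := d5 2 3 (by unfold Far Near; omega)
      have m32 := d5 3 2 (by unfold Far Near; omega)
      have m43 := d5 4 3 (by unfold Far Near; omega)
      have m34 := d5 3 4 (by unfold Far Near; omega)
      by_cases h3 : G.Adj z (h 3)
      · exact ⟨h0, n21 (m32 h3), n45 (m34 h3), ⟨fun _ => m34 h3, fun _ => m32 h3⟩, Or.inl h3⟩
      · have h2 : ¬ G.Adj z (h 2) := fun h2 => h3 (m23 h2)
        have h4 : ¬ G.Adj z (h 4) := fun h4 => h3 (m43 h4)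
        have h1 : ¬ G.Adj z (h 1) := fun h1 => by
          by_cases h5 : G.Adj z (h 5)
          · exact X.anti.dart1 X.dart Z.out 1 5 3 4 (by unfold Far Near; omega) h1 h5 h3 h4
          · exact X.anti.c5 X.hole 0 2 5 1 (by unfold Far Near; omega) h0 h2 h5 h1
        have h5 : ¬ G.Adj z (h 5) := fun h5 =>
          X.anti.c5 X.hole 0 4 1 5 (by unfold Far Near; omega) h0 h4 h1 h5
        refine (single fun a ha hza => ?_).elim
        rcases X.cases6 ha with rfl | rfl | rfl | rfl | rfl | rfl <;> tauto
    · refine (X.apex_of_anticomplete Z hwz (fun i hwi => ?_) h0).resolve_right single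
      exact hw0 (hw _ ⟨i, rfl⟩ hwi ▸ hwi)
  · exfalso
    have step : ∀ i b, Far 6 i b ∧ Far 6 0 b ∧ Near 6 0 i ∧ 0 < i ∧ i < 6 ∧ 0 < b ∧ b < 6 →
        G.Adj z (h i) → G.Adj z (h b) := by
      rintro i b ⟨i1, i2, i3, i4, i5, b1, b2⟩ hi
      by_contra hb
      exact hole2 X.hole (fun e => Z.out ⟨0, e.symm⟩) h0 hL (hKq i i4 i5) (hKq b b1 b2) hi
        (X.anti.adj i1) (X.anti.adj i2) (X.anti.nadj i3) hb
    have h1 : ¬ G.Adj z (h 1) := fun h1 =>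
      X.anti.dart2 X.dart X.le 1 3 (by unfold Far; omega) hwz h1
        (step 1 3 (by unfold Far Near; omega) h1) (step 1 4 (by unfold Far Near; omega) h1)
        (hwn 1 (by omega) (by omega)) (hwn 3 (by omega) (by omega)) (hwn 4 (by omega) (by omega))
    have h5 : ¬ G.Adj z (h 5) := fun h5 =>
      X.anti.dart2 X.dart X.le 5 2 (by unfold Far; omega) hwz h5
        (step 5 2 (by unfold Far Near; omega) h5) (step 5 3 (by unfold Far Near; omega) h5)
        (hwn 5 (by omega) (by omega)) (hwn 2 (by omega) (by omega)) (hwn 3 (by omega) (by omega))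
    have h24 : G.Adj z (h 2) → ¬ G.Adj z (h 4) := fun h2 h4 =>
      X.anti.dart1 X.dart Z.out 2 4 0 5 (by unfold Far Near; omega) h2 h4 h0 h5
    have h23 : G.Adj z (h 2) → ¬ G.Adj z (h 3) := fun h2 h3 =>
      X.anti.c5 X.hole 2 4 1 3 (by unfold Far Near; omega) h2 (h24 h2) h1 h3
    have h34 : G.Adj z (h 3) → ¬ G.Adj z (h 4) := fun h3 h4 =>
      X.anti.c5 X.hole 4 2 5 3 (by unfold Far Near; omega) h4 (fun h2 => h24 h2 h4) h5 h3
    by_cases h2 : G.Adj z (h 2)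
    · have h3 := h23 h2
      have h4 := h24 h2
      obtain ⟨-, b, hb, hs, hne, hnb⟩ := X.obstruction Z 2 fun a ha hza => by
        rcases X.cases6 ha with rfl | rfl | rfl | rfl | rfl | rfl <;> tauto
      obtain ⟨u, hu, hub⟩ := hs
      rcases X.cases6 hb with rfl | rfl | rfl | rfl | rfl | rfl
      · exact hnb f20
      · exact hK1 u hu hub
      · exact hne rfl
      · exact h3 (X.reach Z 2 3 5 (by unfold Far Near; omega) ⟨u, hu, hub⟩ hK5 h2 h5)
      · exact hnb (X.anti.adj (by unfold Far; omega))
      · exact hK5 u hu hub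
    by_cases h4 : G.Adj z (h 4)
    · have h3 : ¬ G.Adj z (h 3) := fun h3 => h34 h3 h4
      obtain ⟨-, b, hb, hs, hne, hnb⟩ := X.obstruction Z 4 fun a ha hza => by
        rcases X.cases6 ha with rfl | rfl | rfl | rfl | rfl | rfl <;> tauto
      obtain ⟨u, hu, hub⟩ := hs
      rcases X.cases6 hb with rfl | rfl | rfl | rfl | rfl | rfl
      · exact hnb f40
      · exact hK1 u hu hub
      · exact hnb (X.anti.adj (by unfold Far; omega))
      · exact h3 (X.reach Z 4 3 1 (by unfold Far Near; omega) ⟨u, hu, hub⟩ hK1 h4 h1)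
      · exact hne rfl
      · exact hK5 u hu hub
    obtain ⟨h3, b, hb, hs, hne, hnb⟩ := X.obstruction Z 3 fun a ha hza => by
      rcases X.cases6 ha with rfl | rfl | rfl | rfl | rfl | rfl <;> tauto
    obtain ⟨u, hu, hub⟩ := hs
    rcases X.cases6 hb with rfl | rfl | rfl | rfl | rfl | rfl
    · exact hnb f30
    · exact hK1 u hu hub
    · exact h2 (X.reach Z 3 2 5 (by unfold Far Near; omega) ⟨u, hu, hub⟩ hK5 h3 h5)
    · exact hne rfl
    · exact h4 (X.reach Z 3 4 1 (by unfold Far Near; omega) ⟨u, hu, hub⟩ hK1 h3 h1)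
    · exact hK5 u hu hub

/-- Under the standard shape, a boundary vertex is adjacent to all seen antihole vertices. -/
theorem _root_.Apex.complete (T : Apex G h z) (X : Config G 6 h v K) (Z : Contact G h K z)
    (hp : Seen G K (h 0)) {a : V} (ha : a ∈ Set.range h) (hs : Seen G K a) : G.Adj z a := by
  obtain ⟨h0, h1, h5, h24, h32⟩ := T
  have hK1 := X.not_seen hp 1 (by unfold Near; omega)
  have hK5 := X.not_seen hp 5 (by unfold Near; omega)
  rcases X.cases6 ha with rfl | rfl | rfl | rfl | rfl | rfl
  · exact h0
  · exact hs.elim fun u hu => (hK1 u hu.1 hu.2).elim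
  · by_contra h2
    exact h2 (X.reach Z 3 2 5 (by unfold Far Near; omega) hs hK5 (h32.resolve_right h2) h5)
  · by_contra h3
    exact h3 (X.reach Z 2 3 5 (by unfold Far Near; omega) hs hK5 (h32.resolve_left h3) h5)
  · by_contra h4
    exact h4 (X.reach Z 3 4 1 (by unfold Far Near; omega) hs hK1
      (h32.resolve_right fun h2 => h4 (h24.1 h2)) h1)
  · exact hs.elim fun u hu => (hK5 u hu.1 hu.2).elim

/-- A boundary vertex has the standard shape at some seen antihole vertex, as soon as there is a seen
antihole vertex. -/
theorem exists_apex (X : Config G 6 h v K) (Z : Contact G h K z) {b : V}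
    (hb : b ∈ Set.range h) (hs : Seen G K b) :
    ∃ c, Seen G K (h c) ∧ Apex G (fun i => h (i + c)) z := by
  obtain ⟨w, hw, hwz⟩ := Z.ex
  obtain ⟨u, hu, hub⟩ := hs
  obtain ⟨q, ⟨c, rfl⟩, hq, ⟨y, hy, hyz, hyq⟩, hL⟩ := X.core.first_hit Z.notMem hw hwz hu hb hub
  refine ⟨c, hq, (X.shift c).apex_of_linked (Z.shift c) hy hyz ?_ ?_ ?_⟩
  · rw [AntiHole.range_shift]
    simpa using hyq
  · rw [AntiHole.range_shift]
    simpa using hL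
  · show Seen G K (h (0 + c))
    rwa [zero_add]

/-- Two nonadjacent boundary vertices do not have the standard shape at the same antihole vertex. -/
theorem apex_apex_false (X : Config G 6 h v K) (Z : Contact G h K z) (Z' : Contact G h K z')
    (hne : z ≠ z') (hzz : ¬ G.Adj z z') (T : Apex G h z) (T' : Apex G h z')
    (hs : ∀ a ∈ Set.range h, Seen G K a → G.Adj z a ∧ G.Adj z' a) : False := by
  have key : ∀ {z z' : V}, Contact G h K z → Contact G h K z' → z ≠ z' → ¬ G.Adj z z' →
      Apex G h z → Apex G h z' → (∀ a ∈ Set.range h, Seen G K a → G.Adj z a ∧ G.Adj z' a) →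
      G.Adj z (h 3) → ¬ G.Adj z (h 2) → False := by
    intro z z' Z Z' hne hzz T T' hs h3 h2
    have hK : ∀ i, ¬ (G.Adj z (h i) ∧ G.Adj z' (h i)) → ∀ u ∈ K, ¬ G.Adj u (h i) :=
      fun i hi u hu hui => hi (hs _ ⟨i, rfl⟩ ⟨u, hu, hui⟩)
    by_cases h3' : G.Adj z' (h 3)
    · exact X.anti.dart3 X.dart hne hzz 3 0 1 (by unfold Far Near; omega) h3 T.1 T.2.1 h3' T'.1
        T'.2.1
    · exact hole3 X.hole hne hzz (X.linked Z.ex Z'.ex) (hK 3 (fun e => h3' e.2))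
        (hK 5 (fun e => T.2.2.1 e.1)) (hK 2 (fun e => h2 e.1)) h3
        (X.anti.adj (by unfold Far; omega)) (X.anti.adj (by unfold Far; omega))
        (T'.2.2.2.2.resolve_left h3') h3' (fun e => T.2.2.1 e.1) h2
  by_cases h2 : G.Adj z (h 2)
  · by_cases h2' : G.Adj z' (h 2)
    · exact X.anti.dart3 X.dart hne hzz 2 0 5 (by unfold Far Near; omega) h2 T.1 T.2.2.1 h2' T'.1
        T'.2.2.1
    · exact key Z' Z hne.symm (fun e => hzz e.symm) T' T (fun a ha hsa => (hs a ha hsa).symm)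
        (T'.2.2.2.2.resolve_right h2') h2'
  · exact key Z Z' hne hzz T T' hs (T.2.2.2.2.resolve_right h2) h2

end Config

namespace Config

variable {V : Type*} {G : SimpleGraph V} {k : ℤ} {h : ℤ → V} {v z z' : V} {K : Set V}

/-- Two boundary vertices that have the standard shape at seen vertices `h 0` and `h s`, and are
complete to all seen vertices, are adjacent. -/
theorem apex_pair_false (X : Config G 6 h v K) (Z : Contact G h K z) (Z' : Contact G h K z')
    (hne : z ≠ z') (hzz : ¬ G.Adj z z') {s : ℤ} (hs0 : 0 ≤ s) (hs6 : s < 6) (T : Apex G h z)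
    (T' : Apex G (fun i => h (i + s)) z') (hp : Seen G K (h 0)) (hps : Seen G K (h s))
    (hs : ∀ a ∈ Set.range h, Seen G K a → G.Adj z a ∧ G.Adj z' a) : False := by
  have hz0 := (hs _ ⟨0, rfl⟩ hp).2
  have hzs := (hs _ ⟨s, rfl⟩ hps).1
  have hK : ∀ i, ¬ (G.Adj z (h i) ∧ G.Adj z' (h i)) → ∀ u ∈ K, ¬ G.Adj u (h i) :=
    fun i hi u hu hui => hi (hs _ ⟨i, rfl⟩ ⟨u, hu, hui⟩)
  have e6 : h 6 = h 0 := X.anti.per 0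
  have e7 : h 7 = h 1 := X.anti.per 1
  have e8 : h 8 = h 2 := X.anti.per 2
  have e9 : h 9 = h 3 := X.anti.per 3
  obtain ⟨-, n1, n5, i24, h32⟩ := id T
  interval_cases s
  · simp only [add_zero] at T'
    exact X.apex_apex_false Z Z' hne hzz T T' hs
  · exact n1 hzs
  · obtain ⟨t0, t1, t5, t24, t32⟩ := T'
    norm_num [e6, e7, e8, e9] at t0 t1 t5 t24 t32
    exact X.anti.dart3 X.dart hne hzz 4 0 1 (by unfold Far Near; omega) (i24.1 hzs) T.1 n1
      (t24.2 hz0) hz0 t5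
  · obtain ⟨t0, t1, t5, t24, t32⟩ := T'
    norm_num [e6, e7, e8, e9] at t0 t1 t5 t24 t32
    by_cases h2 : G.Adj z (h 2)
    · by_cases h1 : G.Adj z' (h 1)
      · exact X.cross Z Z' hne hzz 2 5 (by unfold Far; omega) (hK 2 fun e => t5 e.2)
          (hK 5 fun e => n5 e.1) h2 (t24.2 h1) n5 t5
      · exact X.anti.dart3 X.dart hne hzz 3 0 1 (by unfold Far Near; omega) hzs T.1 n1 t0 hz0 h1
    · exact X.anti.dart3 X.dart hne hzz 0 3 2 (by unfold Far Near; omega) T.1 hzs h2 hz0 t0 t5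
  · obtain ⟨t0, t1, t5, t24, t32⟩ := T'
    norm_num [e6, e7, e8, e9] at t0 t1 t5 t24 t32
    exact X.anti.dart3 X.dart hne hzz 2 0 5 (by unfold Far Near; omega) (i24.2 hzs) T.1 n5
      (t24.1 hz0) hz0 t1
  · exact n5 hzs

/-- If no antihole vertex is seen, a boundary vertex has the standard shape at each of its antihole
neighbors. -/
theorem apex_of_unseen (X : Config G 6 h v K) (Z : Contact G h K z)
    (hno : ∀ a ∈ Set.range h, ¬ Seen G K a) (s : ℤ) (hs : G.Adj z (h s)) :
    Apex G (fun i => h (i + s)) z := by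
  obtain ⟨w, hw, hwz⟩ := Z.ex
  refine ((X.shift s).apex_of_anticomplete (Z.shift s) hwz
    (fun i hwi => hno _ ⟨i + s, rfl⟩ ⟨w, hw, hwi⟩) (by simpa using hs)).resolve_right ?_
  intro hr
  rw [AntiHole.range_shift] at hr
  obtain ⟨-, b, hb, hsb, -⟩ := X.obstruction Z s (by simpa using hr)
  exact hno b hb hsb

theorem exists_adj (X : Config G k h v K) (Z : Contact G h K z)
    (hno : ∀ a ∈ Set.range h, ¬ Seen G K a) : ∃ s, G.Adj z (h s) := by
  by_contra hcon
  obtain ⟨-, b, hb, hsb, -⟩ := X.obstruction Z 0 (by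
    rintro a ⟨i, rfl⟩ hi
    exact absurd ⟨i, hi⟩ hcon)
  exact hno b hb hsb

/-- Two nonadjacent boundary vertices have a common antihole neighbor when no antihole vertex is
seen. -/
theorem apex_disjoint_false (X : Config G 6 h v K) (Z : Contact G h K z) (Z' : Contact G h K z')
    (hne : z ≠ z') (hzz : ¬ G.Adj z z') (hK : ∀ i, ∀ u ∈ K, ¬ G.Adj u (h i)) (T : Apex G h z)
    (hdis : ∀ i, G.Adj z' (h i) → ¬ G.Adj z (h i)) {a : V} (ha : a ∈ Set.range h)
    (hza : G.Adj z' a) : False := by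
  have go : ∀ i j, Far 6 i j → G.Adj z (h i) → G.Adj z' (h j) → False :=
    fun i j hij hi hj => X.cross Z Z' hne hzz i j hij (hK i) (hK j) hi hj (hdis j hj)
      fun hi' => hdis i hi' hi
  obtain ⟨h0, -, -, h24, h32⟩ := T
  by_cases h2 : G.Adj z (h 2)
  · rcases X.cases6 ha with rfl | rfl | rfl | rfl | rfl | rfl
    · exact hdis 0 hza h0
    · exact go 4 1 (by unfold Far; omega) (h24.1 h2) hza
    · exact hdis 2 hza h2
    · exact go 0 3 (by unfold Far; omega) h0 hza
    · exact hdis 4 hza (h24.1 h2)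
    · exact go 2 5 (by unfold Far; omega) h2 hza
  · have h3 := h32.resolve_right h2
    rcases X.cases6 ha with rfl | rfl | rfl | rfl | rfl | rfl
    · exact hdis 0 hza h0
    · exact go 3 1 (by unfold Far; omega) h3 hza
    · exact go 0 2 (by unfold Far; omega) h0 hza
    · exact hdis 3 hza h3
    · exact go 0 4 (by unfold Far; omega) h0 hza
    · exact go 3 5 (by unfold Far; omega) h3 hza

theorem adj_of_unseen_six (X : Config G 6 h v K) (Z : Contact G h K z) (Z' : Contact G h K z')
    (hne : z ≠ z') (hno : ∀ a ∈ Set.range h, ¬ Seen G K a) : G.Adj z z' := by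
  by_contra hzz
  have hK : ∀ i, ∀ u ∈ K, ¬ G.Adj u (h i) := fun i u hu hui => hno _ ⟨i, rfl⟩ ⟨u, hu, hui⟩
  by_cases hdis : ∀ i, G.Adj z' (h i) → ¬ G.Adj z (h i)
  · obtain ⟨s, hs⟩ := X.exists_adj Z hno
    obtain ⟨j, hj⟩ := X.exists_adj Z' hno
    refine (X.shift s).apex_disjoint_false (Z.shift s) (Z'.shift s) hne hzz (fun i => hK _)
      (X.apex_of_unseen Z hno s hs) (fun i => hdis _) (a := h j) ?_ hj
    rw [AntiHole.range_shift]
    exact ⟨j, rfl⟩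
  · push Not at hdis
    obtain ⟨s, hs', hs⟩ := hdis
    refine (X.shift s).apex_apex_false (Z.shift s) (Z'.shift s) hne hzz
      (X.apex_of_unseen Z hno s hs) (X.apex_of_unseen Z' hno s hs') ?_
    rw [AntiHole.range_shift]
    exact fun a ha hsa => (hno a ha hsa).elim

/-- The boundary vertices outside an antihole of length six form a clique, each adjacent to all seen
antihole vertices. -/
theorem boundary_six (X : Config G 6 h v K) :
    (∀ z z', Contact G h K z → Contact G h K z' → z ≠ z' → G.Adj z z') ∧
      ∀ z, Contact G h K z → ∀ a ∈ Set.range h, Seen G K a → G.Adj z a := by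
  have hcomp : ∀ z, Contact G h K z → ∀ a ∈ Set.range h, Seen G K a → G.Adj z a := by
    intro z Z a ha hs
    obtain ⟨c, hc, T⟩ := X.exists_apex Z ha hs
    rw [← AntiHole.range_shift c] at ha
    exact T.complete (X.shift c) (Z.shift c) (by rwa [zero_add]) ha hs
  refine ⟨fun z z' Z Z' hne => ?_, hcomp⟩
  by_cases hno : ∀ a ∈ Set.range h, ¬ Seen G K a
  · exact X.adj_of_unseen_six Z Z' hne hno
  · push Not at hno
    obtain ⟨b, hb, hs⟩ := hno
    obtain ⟨c, hc, T⟩ := X.exists_apex Z hb hs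
    obtain ⟨c', hc', T'⟩ := X.exists_apex Z' hb hs
    by_contra hzz
    have hper : ∀ i, h (i + (c' - c) % 6 + c) = h (i + c') := by
      intro i
      rw [← X.anti.per_mul ((c' - c) / 6) (i + (c' - c) % 6 + c)]
      congr 1
      omega
    refine (X.shift c).apex_pair_false (Z.shift c) (Z'.shift c) hne hzz (s := (c' - c) % 6)
      (by omega) (by omega) T (by simpa only [hper] using T') (by rwa [zero_add]) ?_ ?_
    · have := hper 0
      rw [zero_add, zero_add] at this
      show Seen G K (h ((c' - c) % 6 + c))
      rwa [this]
    · rw [AntiHole.range_shift]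
      exact fun a ha hsa => ⟨hcomp z Z a ha hsa, hcomp z' Z' a ha hsa⟩

/-! ### Longer antiholes -/

/-- No vertex of an antihole of length at least seven is seen. -/
theorem unseen (X : Config G k h v K) (hk : 7 ≤ k) (hv : ∀ i, ¬ G.Adj v (h i)) :
    ∀ u ∈ K, ∀ i, ¬ G.Adj u (h i) := by
  intro u hu
  obtain ⟨m, f, h0, hm, ha, hfK⟩ := X.core.conn u hu
  suffices key : ∀ n ≤ m, ∀ i, ¬ G.Adj (f n) (h i) by
    rw [← hm]
    exact key m le_rfl
  intro n
  induction n with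
  | zero => rw [h0]; exact fun _ => hv
  | succ n ih =>
    intro hn i hi
    have hK : f (n + 1) ∈ K := by
      rcases hn.lt_or_eq with hlt | heq
      · exact hfK _ (by omega) hlt
      · rw [heq, hm]; exact hu
    have hS := X.core.disj _ hK
    have st := X.anti.stable X.hole X.dart X.le hS (ha n hn) (ih (by omega))
    -- a core vertex cannot have the second neighbor provided by rotation
    have := X.anti.alternating X.dart hk hS st i hi
    exact X.anti.ne X.le (by omega) (by omega)
      (X.core.uniq _ hK _ ⟨i, rfl⟩ _ ⟨i + 2, rfl⟩ hi this)

/-- The boundary vertices of the core form a clique when the antihole has length at least seven. -/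
theorem boundary_long (X : Config G k h v K) (hk : 7 ≤ k)
    (hno : ∀ u ∈ K, ∀ i, ¬ G.Adj u (h i)) (Z : Contact G h K z) (Z' : Contact G h K z')
    (hne : z ≠ z') : G.Adj z z' := by
  have hno' : ∀ a ∈ Set.range h, ¬ Seen G K a := by
    rintro a ⟨i, rfl⟩ ⟨u, hu, hui⟩
    exact hno u hu i hui
  have stab : ∀ {z}, Contact G h K z → ∀ i, G.Adj z (h i) → ¬ G.Adj z (h (i + 1)) := by
    intro z Z i h0 h1
    obtain ⟨w, hw, hwz⟩ := Z.ex
    exact X.anti.stable X.hole X.dart X.le Z.out hwz (hno w hw) i h0 h1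
  have alt : ∀ {z}, Contact G h K z → ∀ i, G.Adj z (h i) → G.Adj z (h (i + 2)) :=
    fun Z i h0 => X.anti.alternating X.dart hk Z.out (stab Z) i h0
  have hK : ∀ i, ∀ u ∈ K, ¬ G.Adj u (h i) := fun i u hu => hno u hu i
  by_contra hzz
  by_cases hdis : ∀ i, G.Adj z' (h i) → ¬ G.Adj z (h i)
  · have go : ∀ i j, Far k i j → G.Adj z (h i) → G.Adj z' (h j) → False :=
      fun i j hij hi hj => X.cross Z Z' hne hzz i j hij (hK i) (hK j) hi hj (hdis j hj)
        fun hi' => hdis i hi' hi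
    obtain ⟨i, hi⟩ := X.exists_adj Z hno'
    obtain ⟨j, hj⟩ := X.exists_adj Z' hno'
    have h1 := Int.emod_nonneg (j - i) (show k ≠ 0 by omega)
    have h2 := Int.emod_lt_of_pos (j - i) (show 0 < k by omega)
    have hj' : h j = h (i + (j - i) % k) := by
      rw [← X.anti.per_mul ((j - i) / k) (i + (j - i) % k)]
      congr 1
      have := Int.emod_add_mul_ediv (j - i) k
      omega
    rw [hj'] at hj
    generalize (j - i) % k = r at *
    by_cases hr0 : r = 0
    · exact hdis _ hj (by rwa [hr0, add_zero])
    -- if the two antihole neighbors are consecutive, rotate the first one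
    by_cases hr1 : r = 1
    · exact go (i + 2 + 2) (i + r) (by unfold Far; omega) (alt Z _ (alt Z _ hi)) hj
    by_cases hrk : r = k - 1
    · exact go (i + 2) (i + r) (by unfold Far; omega) (alt Z _ hi) hj
    · exact go i (i + r) (by unfold Far; omega) hi hj
  · push Not at hdis
    obtain ⟨i, hi', hi⟩ := hdis
    have st : ∀ {z}, Contact G h K z → G.Adj z (h i) → ¬ G.Adj z (h (i + 3)) := by
      intro z Z hi
      have := stab Z _ (alt Z i hi)
      rwa [show i + 2 + 1 = i + 3 by omega] at this
    exact X.anti.dart3 X.dart hne hzz i (i + 2) (i + 3) (by unfold Far Near; omega) hi (alt Z i hi)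
      (st Z hi) hi' (alt Z' i hi') (st Z' hi')

end Config

/-! ### No antihole misses a vertex and its neighborhood -/

section Main

variable {V : Type*} {G : SimpleGraph V}

/-- A vertex outside an antihole of length at least six has a neighbor in it: otherwise the boundary
of a maximal core around that vertex is a clique cutset. -/
theorem antihole_false [Fintype V] (hhole : ∀ k : ℕ, 5 ≤ k → IsEmpty (cycleGraph k ↪g G))
    (hdart : IsEmpty (dartGraph ↪g G)) (hatom : ¬ HasCliqueCutset G) {k : ℤ} (hk : 6 ≤ k)
    {h : ℤ → V} (H : AntiHole G k h) {v : V} (hv : v ∉ Set.range h)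
    (hva : ∀ i, ¬ G.Adj v (h i)) : False := by
  have hC : Core G (Set.range h) v {v} := Core.singleton hv (by rintro _ ⟨i, rfl⟩; exact hva i)
  obtain ⟨K, hKv, hmax⟩ := (Set.toFinite {K | Core G (Set.range h) v K}).exists_le_maximal hC
  have C : Core G (Set.range h) v K := hmax.prop
  have X : Config G k h v K := ⟨hhole, hdart, hk, H, C, fun z hz hins =>
    hz (hmax.le_of_ge hins (Set.subset_insert z K) (Set.mem_insert z K))⟩
  obtain ⟨hZ, hS⟩ : (∀ z z', Contact G h K z → Contact G h K z' → z ≠ z' → G.Adj z z') ∧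
      ∀ z, Contact G h K z → ∀ a ∈ Set.range h, Seen G K a → G.Adj z a := by
    by_cases h6 : k = 6
    · subst h6
      exact X.boundary_six
    · have hno := X.unseen (by omega) hva
      refine ⟨fun z z' Z Z' hne => X.boundary_long (by omega) hno Z Z' hne, ?_⟩
      rintro z - a ⟨i, rfl⟩ ⟨u, hu, hui⟩
      exact (hno u hu i hui).elim
  obtain ⟨i, hi⟩ : ∃ i, ∀ u ∈ K, ¬ G.Adj u (h i) := by
    by_cases h0 : Seen G K (h 0)
    · exact ⟨1, X.not_seen h0 1 (by unfold Near; omega)⟩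
    · exact ⟨0, fun u hu hu0 => h0 ⟨u, hu, hu0⟩⟩
  refine clique_boundary_false hatom C.mem (fun hiK => C.disj _ hiK ⟨i, rfl⟩) hi ?_
  intro x y hx hy hx' hy' hne
  by_cases hxS : x ∈ Set.range h
  · by_cases hyS : y ∈ Set.range h
    · obtain ⟨w, hw, hwx⟩ := hx'
      obtain ⟨w', hw', hwy⟩ := hy'
      exact C.clique w hw w' hw' x hxS y hyS hwx hwy hne
    · exact (hS y ⟨hy, hyS, hy'⟩ x hxS hx').symm
  · by_cases hyS : y ∈ Set.range h
    · exact hS x ⟨hx, hxS, hx'⟩ y hyS hy'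
    · exact hZ x y ⟨hx, hxS, hx'⟩ ⟨hy, hyS, hy'⟩ hne

/-- An induced complement of `C_k`, indexed periodically by `ℤ`. -/
theorem antiHole_of_embedding {k : ℕ} (hk : 6 ≤ k) (φ : (cycleGraph k)ᶜ ↪g G) :
    AntiHole G k (fun i : ℤ => φ ⟨(i % k).toNat, by
      have := Int.emod_lt_of_pos i (show (0 : ℤ) < k by omega)
      have := Int.emod_nonneg i (show (k : ℤ) ≠ 0 by omega)
      omega⟩) := by
  have hadj : ∀ a b : Fin k, a.1 < b.1 →
      (G.Adj (φ a) (φ b) ↔ b.1 ≠ a.1 + 1 ∧ b.1 + 1 ≠ a.1 + k) := by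
    intro a b hab
    rw [φ.map_adj_iff, compl_adj, cycleGraph_adj', Fin.sub_val_of_le (le_of_lt (Fin.lt_def.2 hab)),
      Fin.coe_sub_iff_lt.2 (Fin.lt_def.2 hab)]
    have hb := b.2
    have : a ≠ b := fun e => by subst e; omega
    simp only [ne_eq, this, not_false_eq_true, true_and]
    omega
  have hmod : ∀ i : ℤ, 0 ≤ i % k ∧ i % k < k := fun i =>
    ⟨Int.emod_nonneg i (by omega), Int.emod_lt_of_pos i (by omega)⟩
  have hper : ∀ i : ℤ, (i + k) % k = i % k := fun i => by simp
  have hadd : ∀ i d : ℤ, 0 ≤ d → d < k →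
      (i + d) % k = i % k + d ∨ (i + d) % k = i % k + d - k := by
    intro i d h0 hd
    have h1 := hmod i
    have h2 : (i + d) % k = (i % k + d) % k := by simp
    rw [h2]
    by_cases hlt : i % k + d < k
    · exact Or.inl (Int.emod_eq_of_lt (by omega) hlt)
    · right
      rw [← Int.emod_eq_of_lt (a := i % k + d - k) (b := k) (by omega) (by omega)]
      simp
  have hadj' : ∀ a b : Fin k,
      (G.Adj (φ a) (φ b) ↔ a.1 ≠ b.1 ∧ b.1 ≠ a.1 + 1 ∧ b.1 + 1 ≠ a.1 + k ∧ a.1 ≠ b.1 + 1 ∧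
        a.1 + 1 ≠ b.1 + k) := by
    intro a b
    have ha := a.2
    have hb := b.2
    rcases lt_trichotomy a.1 b.1 with hab | hab | hab
    · rw [hadj a b hab]
      omega
    · have : a = b := Fin.ext hab
      subst this
      simp
    · rw [G.adj_comm, hadj b a hab]
      omega
  refine ⟨?_, ?_, ?_⟩
  · intro i j h1 h2
    obtain ⟨d, rfl⟩ : ∃ d, j = i + d := ⟨j - i, by omega⟩
    have h3 := hadd i d (by omega) (by omega)
    have h4 := hmod i
    have h5 := hmod (i + d)
    refine (hadj' _ _).2 ?_
    dsimp only
    omega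
  · intro i hi
    have h3 := hadd i 1 (by omega) (by omega)
    have h4 := hmod i
    have h5 := hmod (i + 1)
    have h6 := (hadj' _ _).1 hi
    dsimp only at h6
    omega
  · intro i
    simp only [hper]

/-- The complement of `C_5` is again a `C_5`, in the vertex order `0, 2, 4, 1, 3`. -/
theorem coC5_false (hhole : ∀ k : ℕ, 5 ≤ k → IsEmpty (cycleGraph k ↪g G))
    (φ : (cycleGraph 5)ᶜ ↪g G) : False := by
  have key : ∀ a b, G.Adj (φ a) (φ b) ↔ (cycleGraph 5)ᶜ.Adj a b := fun a b => φ.map_adj_iff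
  refine c5_false hhole (a := φ 0) (b := φ 2) (c := φ 4) (d := φ 1) (e := φ 3) ?_ ?_ ?_ ?_ ?_ ?_ ?_
    ?_ ?_ ?_ <;> rw [key, compl_adj, cycleGraph_adj'] <;> decide

end Main

theorem stmt7 {V : Type*} [Fintype V] (G : SimpleGraph V)
    (hhole : ∀ k : ℕ, 5 ≤ k → IsEmpty (cycleGraph k ↪g G))
    (hdart : IsEmpty (dartGraph ↪g G))
    (hatom : ¬ HasCliqueCutset G)
    (v : V) (k : ℕ) (hk : 5 ≤ k) :
    IsEmpty (cycleGraph k ↪g G.induce (vertexAnti G v)) ∧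
      IsEmpty ((cycleGraph k)ᶜ ↪g G.induce (vertexAnti G v)) := by
  refine ⟨⟨fun φ => (hhole k hk).false ((Embedding.induce _).comp φ)⟩, ⟨fun φ => ?_⟩⟩
  rcases hk.eq_or_lt with rfl | hk6
  · exact coC5_false hhole ((Embedding.induce _).comp φ)
  · refine antihole_false hhole hdart hatom (k := k) (by omega)
      (antiHole_of_embedding hk6 ((Embedding.induce _).comp φ)) (v := v) ?_ ?_
    · rintro ⟨i, hi⟩
      exact (φ _).2.1 hi
    · exact fun i => (φ _).2.2
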